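/- Let α ≥ 0 and x ≥ δ ≥ 1 be real numbers. Then (ln δ + 2(1 - 2δ/(x+δ)))·x^α ≤ (ln δ + 4 - 8√δ/(√x + √δ))·x^α ≤ x^α·ln x ≤ (x^(α+1/2)/√δ - x^(α-1/2)·√δ + x^α·ln δ) ≤ (x^(α+1)/(2δ) - x^(α-1)·δ/2 + x^α·ln δ). -/

import Mathlib

/-!
Put `a = √x`, `b = √δ` and `t = a / b ≥ 1`, so that `log x - log δ = 2 * log t`. After removing
`log δ` and the positive factor `x ^ α`, the chain reads
`2 (a² - b²) / (a² + b²) ≤ 4 (a - b) / (a + b) ≤ 2 log t ≤ t - 1/t ≤ (t² - 1/t²) / 2`.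
The two outer inequalities are algebraic: they amount to `(a + b)² ≤ 2 (a² + b²)` and
`2 ≤ t + 1/t`. The lower bound on `log t` is `2 (t - 1) / (t + 1) ≤ log t`
(`Real.le_log_one_add_of_nonneg`), and the upper bound is `u ≤ sinh u` at `u = log t`.
-/

theorem stmt_6 (x δ α : ℝ) (hα : 0 ≤ α) (hδ : 1 ≤ δ) (hx : δ ≤ x) :
    (Real.log δ + 2 * (1 - 2 * δ / (x + δ))) * x ^ α
        ≤ (Real.log δ + 4 - 8 * Real.sqrt δ / (Real.sqrt x + Real.sqrt δ)) * x ^ α ∧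
      (Real.log δ + 4 - 8 * Real.sqrt δ / (Real.sqrt x + Real.sqrt δ)) * x ^ α
        ≤ x ^ α * Real.log x ∧
      x ^ α * Real.log x
        ≤ x ^ (α + 1 / 2) / Real.sqrt δ - x ^ (α - 1 / 2) * Real.sqrt δ + x ^ α * Real.log δ ∧
      x ^ (α + 1 / 2) / Real.sqrt δ - x ^ (α - 1 / 2) * Real.sqrt δ + x ^ α * Real.log δ
        ≤ x ^ (α + 1) / (2 * δ) - x ^ (α - 1) * δ / 2 + x ^ α * Real.log δ := by
  obtain ⟨a, ha⟩ : ∃ a, a = √x := ⟨_, rfl⟩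
  obtain ⟨b, hb⟩ : ∃ b, b = √δ := ⟨_, rfl⟩
  have hx0 : 0 < x := by linarith
  have hδ0 : 0 < δ := by linarith
  have ha0 : 0 < a := ha ▸ Real.sqrt_pos.2 hx0
  have hb0 : 0 < b := hb ▸ Real.sqrt_pos.2 hδ0
  have hab : b ≤ a := by rw [ha, hb]; exact Real.sqrt_le_sqrt hx
  have hxa : x = a ^ 2 := by rw [ha, Real.sq_sqrt hx0.le]
  have hδb : δ = b ^ 2 := by rw [hb, Real.sq_sqrt hδ0.le]
  have hP : 0 < x ^ α := Real.rpow_pos_of_pos hx0 α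
  have e1 : x ^ (α + 1 / 2) = x ^ α * a := by
    rw [Real.rpow_add hx0, ← Real.sqrt_eq_rpow, ha]
  have e2 : x ^ (α - 1 / 2) = x ^ α / a := by
    rw [Real.rpow_sub hx0, ← Real.sqrt_eq_rpow, ha]
  have e3 : x ^ (α + 1) = x ^ α * a ^ 2 := by
    rw [Real.rpow_add hx0, Real.rpow_one, ← hxa]
  have e4 : x ^ (α - 1) = x ^ α / a ^ 2 := by
    rw [Real.rpow_sub hx0, Real.rpow_one, ← hxa]
  have ht : 1 ≤ a / b := (one_le_div hb0).2 hab
  have hlog : Real.log x = Real.log δ + 2 * Real.log (a / b) := by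
    rw [Real.log_div ha0.ne' hb0.ne', hxa, hδb, Real.log_pow, Real.log_pow]
    push_cast
    ring
  have hlow : 2 * (a - b) / (a + b) ≤ Real.log (a / b) := by
    have h := Real.le_log_one_add_of_nonneg (x := a / b - 1) (by linarith)
    rw [add_sub_cancel] at h
    have h1 : 2 * (a / b - 1) = 2 * (a - b) / b := by
      field_simp
    have h2 : a / b - 1 + 2 = (a + b) / b := by
      field_simp
      ring
    rwa [h1, h2, div_div_div_cancel_right₀ hb0.ne'] at h
  have hupp : 2 * Real.log (a / b) ≤ a / b - b / a := by
    have h := Real.self_le_sinh_iff.2 (Real.log_nonneg ht)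
    rw [Real.sinh_log (by positivity), inv_div] at h
    linarith
  rw [e1, e2, e3, e4, hlog, ← ha, ← hb, hxa, hδb]
  rw [hxa] at hP
  refine ⟨mul_le_mul_of_nonneg_right ?_ hP.le, ?_, ?_, ?_⟩
  · have h : (4 - 8 * b / (a + b)) - 2 * (1 - 2 * b ^ 2 / (a ^ 2 + b ^ 2))
        = 2 * (a - b) ^ 3 / ((a + b) * (a ^ 2 + b ^ 2)) := by
      field_simp
      ring
    have : 0 ≤ 2 * (a - b) ^ 3 / ((a + b) * (a ^ 2 + b ^ 2)) := by
      have : 0 ≤ a - b := by linarith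
      positivity
    linarith
  · rw [mul_comm]
    refine mul_le_mul_of_nonneg_left ?_ hP.le
    have h : 4 - 8 * b / (a + b) = 2 * (2 * (a - b) / (a + b)) := by
      field_simp
      ring
    linarith
  · have h := mul_le_mul_of_nonneg_left hupp hP.le
    calc _ = (a ^ 2) ^ α * (2 * Real.log (a / b)) + (a ^ 2) ^ α * Real.log (b ^ 2) := by ring
      _ ≤ (a ^ 2) ^ α * (a / b - b / a) + (a ^ 2) ^ α * Real.log (b ^ 2) := by linarith
      _ = _ := by ring
  · have h : a / b - b / a ≤ a ^ 2 / (2 * b ^ 2) - b ^ 2 / (2 * a ^ 2) := by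
      have h : a ^ 2 / (2 * b ^ 2) - b ^ 2 / (2 * a ^ 2) - (a / b - b / a)
          = (a - b) ^ 3 * (a + b) / (2 * a ^ 2 * b ^ 2) := by
        field_simp
        ring
      have : 0 ≤ (a - b) ^ 3 * (a + b) / (2 * a ^ 2 * b ^ 2) := by
        have : 0 ≤ a - b := by linarith
        positivity
      linarith
    have h' := mul_le_mul_of_nonneg_left h hP.le
    calc _ = (a ^ 2) ^ α * (a / b - b / a) + (a ^ 2) ^ α * Real.log (b ^ 2) := by ring
      _ ≤ (a ^ 2) ^ α * (a ^ 2 / (2 * b ^ 2) - b ^ 2 / (2 * a ^ 2))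
          + (a ^ 2) ^ α * Real.log (b ^ 2) := by linarith
      _ = _ := by ring
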